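/- Let G be a chain graph with chain components 𝒯 and ≺ a consistent strict total order of 𝒯. If the strictly positive joint probability mass function p obeys the multivariate regression Markov property for G, then p factorizes according to the directed acyclic graph of the chain components: p(i) = ∏_{T∈𝒯} p(i_T | i_{pa_D(T)}) for all cells i. -/

import Mathlib

open scoped Classical BigOperators

/-- A mixed graph on a node set `V`: a set of directed edges and a symmetric
irreflexive set of undirected edges, the two edge sets being disjoint. -/
structure MixedGraph (V : Type*) where
  dir : V → V → Prop
  undir : V → V → Prop
  undir_symm : ∀ {a b}, undir a b → undir b a
  undir_irrefl : ∀ a, ¬ undir a a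
  edge_disjoint : ∀ a b, dir a b → ¬ undir a b

namespace MixedGraph

variable {V : Type*} [Fintype V] [DecidableEq V] (G : MixedGraph V)

/-- One step of a semi-directed path: an undirected edge or a directed edge
followed in the direction of traversal. -/
def step (a b : V) : Prop := G.dir a b ∨ G.undir a b

/-- No semi-directed cycle: there is no directed edge `a → b` together with a
semi-directed path from `b` back to `a`. -/
def NoSemiDirectedCycle : Prop :=
  ∀ a b : V, G.dir a b → ¬ Relation.ReflTransGen G.step b a

/-- Two nodes are in the same chain component iff they are joined by a path of
undirected edges (the equivalence relation generated by the undirected part). -/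
def sameComp (a b : V) : Prop := Relation.ReflTransGen G.undir a b

/-- The chain component of a node. -/
noncomputable def component (v : V) : Finset V :=
  Finset.univ.filter fun w => G.sameComp v w

/-- `T` is a chain component of `G`. -/
def IsComponent (T : Finset V) : Prop := ∃ v, T = G.component v

/-- The collection of chain components of `G`. -/
noncomputable def componentsF : Finset (Finset V) :=
  Finset.univ.image fun v => G.component v

/-- The parents `pa_G(A)`: nodes outside `A` with a directed edge into `A`. -/
noncomputable def paG (A : Finset V) : Finset V :=
  Finset.univ.filter fun w => w ∉ A ∧ ∃ v ∈ A, G.dir w v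

/-- The (inclusive) neighbours `Nb_G(A)`: `A` together with all nodes joined to
`A` by an undirected edge. -/
noncomputable def nbG (A : Finset V) : Finset V :=
  A ∪ Finset.univ.filter fun w => ∃ v ∈ A, G.undir v w

/-- The edge relation of the directed graph `D` of chain components:
`T₁ → T₂` iff they are distinct chain components and `G` has a directed edge
from a node of `T₁` to a node of `T₂`. -/
def dirD (T₁ T₂ : Finset V) : Prop :=
  G.IsComponent T₁ ∧ G.IsComponent T₂ ∧ T₁ ≠ T₂ ∧ ∃ v ∈ T₁, ∃ w ∈ T₂, G.dir v w

/-- `pa_D(T)`: the union of the parent components of `T` in `D`. -/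
noncomputable def paD (T : Finset V) : Finset V :=
  Finset.univ.filter fun w => G.dirD (G.component w) T

/-- `nd_D(T)`: the union of the components `T'` such that there is no directed
path from `T` to `T'` in `D`. -/
noncomputable def ndD (T : Finset V) : Finset V :=
  Finset.univ.filter fun w => ¬ Relation.ReflTransGen G.dirD T (G.component w)

/-- A set of nodes `A` is connected if the subgraph of the undirected part of
`G` induced by `A` is connected (in particular nonempty). -/
def ConnectedIn (A : Finset V) : Prop :=
  A.Nonempty ∧ ∀ a ∈ A, ∀ b ∈ A,
    Relation.ReflTransGen (fun x y => x ∈ A ∧ y ∈ A ∧ G.undir x y) a b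

/-- The connected component of `v` inside the induced subgraph on `A`. -/
noncomputable def compIn (A : Finset V) (v : V) : Finset V :=
  A.filter fun w =>
    Relation.ReflTransGen (fun x y => x ∈ A ∧ y ∈ A ∧ G.undir x y) v w

/-- The set of connected components of the induced subgraph on `A`. -/
noncomputable def connComps (A : Finset V) : Finset (Finset V) :=
  A.image fun v => G.compIn A v

/-- `ord` is a strict total order of the chain components consistent with `G`:
`ord T T'` implies that `T` is not a parent component of `T'`. -/
def ConsistentOrder (ord : Finset V → Finset V → Prop) : Prop :=
  (∀ T₁ T₂, G.IsComponent T₁ → G.IsComponent T₂ → T₁ ≠ T₂ →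
      ord T₁ T₂ ∨ ord T₂ T₁) ∧
  (∀ T, G.IsComponent T → ¬ ord T T) ∧
  (∀ T₁ T₂ T₃, G.IsComponent T₁ → G.IsComponent T₂ → G.IsComponent T₃ →
      ord T₁ T₂ → ord T₂ T₃ → ord T₁ T₃) ∧
  (∀ T₁ T₂, G.IsComponent T₁ → G.IsComponent T₂ → ord T₁ T₂ → ¬ G.dirD T₁ T₂)

/-- `pre(T)`: the union of all the chain components `T'` with `T ≺ T'`
(the predecessors, i.e. the past, of `T`). -/
noncomputable def pre (ord : Finset V → Finset V → Prop) (T : Finset V) :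
    Finset V :=
  Finset.univ.filter fun w => ord T (G.component w)

end MixedGraph

/-- A cell of the joint contingency table: variable `v` takes one of the
levels `0, …, r v - 1` (level `0` playing the role of the first level `1`). -/
abbrev Cell {V : Type*} (r : V → ℕ) := ∀ v : V, Fin (r v)

variable {V : Type*} [Fintype V] [DecidableEq V] {r : V → ℕ}

/-- The marginal probability `p_S(i_S)` (as a function of a full cell `i`,
depending on it only through the coordinates in `S`). -/
noncomputable def marginal (p : Cell r → ℝ) (S : Finset V) (i : Cell r) : ℝ :=
  ∑ j : Cell r, if ∀ v ∈ S, j v = i v then p j else 0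

/-- The conditional probability `p_{A|B}(i_A | i_B)`. -/
noncomputable def condProb (p : Cell r → ℝ) (A B : Finset V) (i : Cell r) : ℝ :=
  marginal p (A ∪ B) i / marginal p B i

/-- `p` is a strictly positive joint probability mass function. -/
def IsPosPMF (p : Cell r → ℝ) : Prop :=
  (∀ i, 0 < p i) ∧ ∑ i : Cell r, p i = 1

/-- Conditional independence `A ⊥ B | C`. -/
def CondIndep (p : Cell r → ℝ) (A B C : Finset V) : Prop :=
  ∀ i : Cell r,
    marginal p (A ∪ B ∪ C) i * marginal p C i =
      marginal p (A ∪ C) i * marginal p (B ∪ C) i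

/-- The cell agreeing with `i` on `S` and equal to the first (reference)
level outside `S`. -/
def splice (hr : ∀ v, 2 ≤ r v) (S : Finset V) (i : Cell r) : Cell r :=
  fun v => if v ∈ S then i v else ⟨0, by have := hr v; omega⟩

/-- The conditional multivariate logistic contrast
`η^{(A)}(i_A | i_B) = Σ_{s ⊆ A} (−1)^{|A∖s|} log p_{A|B}((i_s, 1_{A∖s}) | i_B)`. -/
noncomputable def mlContrast (hr : ∀ v, 2 ≤ r v) (p : Cell r → ℝ)
    (A B : Finset V) (i : Cell r) : ℝ :=
  ∑ s ∈ A.powerset,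
    (-1 : ℝ) ^ (A \ s).card * Real.log (condProb p A B (splice hr (s ∪ B) i))

/-- The multivariate regression (MR) Markov property for the chain graph `G`
with respect to the consistent ordering `ord`: for every chain component `T`
and every nonempty `A ⊆ T`, (MR1) if `A` is connected then
`A ⊥ (pre(T)∖pa_G(A)) | pa_G(A)`, and (MR2) if `A` is disconnected then its
connected components are mutually independent given `pre(T)`. -/
def MRMarkov (G : MixedGraph V) (ord : Finset V → Finset V → Prop)
    (p : Cell r → ℝ) : Prop :=
  ∀ T : Finset V, G.IsComponent T → ∀ A ⊆ T, A.Nonempty →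
    (G.ConnectedIn A →
      CondIndep p A (G.pre ord T \ G.paG A) (G.paG A)) ∧
    (¬ G.ConnectedIn A →
      ∀ i : Cell r,
        condProb p A (G.pre ord T) i =
          ∏ Aj ∈ G.connComps A, condProb p Aj (G.pre ord T) i)

/-- The block-recursive Markov property of type IV for the chain graph `G`:
(IV0) `T ⊥ (nd_D(T)∖pa_D(T)) | pa_D(T)`;
(IV1) `A ⊥ (pa_D(T)∖pa_G(A)) | pa_G(A)` for all `A ⊆ T`;
(IV2) `A ⊥ (T∖Nb_G(A)) | pa_D(T)` for all connected `A ⊆ T`. -/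
def TypeIVMarkov (G : MixedGraph V) (p : Cell r → ℝ) : Prop :=
  (∀ T : Finset V, G.IsComponent T →
      CondIndep p T (G.ndD T \ G.paD T) (G.paD T)) ∧
  (∀ T : Finset V, G.IsComponent T → ∀ A ⊆ T,
      CondIndep p A (G.paD T \ G.paG A) (G.paG A)) ∧
  (∀ T : Finset V, G.IsComponent T → ∀ A ⊆ T, G.ConnectedIn A →
      CondIndep p A (T \ G.nbG A) (G.paD T))

/-!
A consistent order puts every parent component of `T` into the past `pre(T)`. The property (MR1) for
`A = T`, which is connected, makes `T` independent of the rest of its past given `pa_G(T)`, hence,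
by weak union, given the larger set `pa_D(T)`. So `p` has the ordered directed Markov property for
the graph of the components, and the chain rule `p(i) = ∏ p(i_T | i_{pre(T)})` collapses to the
factorization. The collapse uses the product form
`p(i_T | i_{pa_D(T)}) p(i_{pre(T)}) = p(i_{T ∪ pre(T)})`, which survives vanishing marginals.
-/

section Marginal

variable {p : Cell r → ℝ} {S S' : Finset V} {i j : Cell r}

theorem marginal_congr (p : Cell r → ℝ) (h : ∀ v ∈ S, i v = j v) :
    marginal p S i = marginal p S j := by
  unfold marginal
  refine Finset.sum_congr rfl fun k _ => if_congr (forall₂_congr fun v hv => ?_) rfl rfl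
  rw [h v hv]

theorem marginal_empty (p : Cell r → ℝ) (i : Cell r) : marginal p ∅ i = ∑ j, p j := by
  simp [marginal]

theorem marginal_univ (p : Cell r → ℝ) (i : Cell r) : marginal p Finset.univ i = p i := by
  simp [marginal, ← funext_iff]

theorem marginal_nonneg (hp : ∀ i, 0 ≤ p i) : 0 ≤ marginal p S i :=
  Finset.sum_nonneg fun j _ => ite_nonneg (hp j) le_rfl

theorem marginal_anti (hp : ∀ i, 0 ≤ p i) (h : S ⊆ S') : marginal p S' i ≤ marginal p S i := by
  refine Finset.sum_le_sum fun j _ => ?_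
  by_cases hj : ∀ v ∈ S', j v = i v
  · rw [if_pos hj, if_pos fun v hv => hj v (h hv)]
  · rw [if_neg hj]
    exact ite_nonneg (hp j) le_rfl

theorem marginal_eq_zero_of_subset (hp : ∀ i, 0 ≤ p i) (h : S ⊆ S') (hS : marginal p S i = 0) :
    marginal p S' i = 0 :=
  le_antisymm ((marginal_anti hp h).trans_eq hS) (marginal_nonneg hp)

theorem sum_marginal_insert_update (p : Cell r → ℝ) {v : V} (hv : v ∉ S) (i : Cell r) :
    ∑ x, marginal p (insert v S) (Function.update i v x) = marginal p S i := by
  have agree_iff (x : Fin (r v)) (j : Cell r) :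
      (∀ w ∈ insert v S, j w = Function.update i v x w) ↔ j v = x ∧ ∀ w ∈ S, j w = i w := by
    rw [Finset.forall_mem_insert, Function.update_self]
    refine and_congr_right fun _ => forall₂_congr fun w hw => ?_
    rw [Function.update_of_ne (ne_of_mem_of_not_mem hw hv)]
  unfold marginal
  rw [Finset.sum_comm]
  refine Finset.sum_congr rfl fun j _ => ?_
  simp only [agree_iff, ite_and, Finset.sum_ite_eq, Finset.mem_univ, if_true]

end Marginal

namespace CondIndep

variable {p : Cell r → ℝ} {A B C D : Finset V}

theorem of_insert_right {v : V} (hvA : v ∉ A) (h : CondIndep p A (insert v B) C) :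
    CondIndep p A B C := by
  by_cases hv : v ∈ B ∪ C
  · have hBC : insert v B ∪ C = B ∪ C := by rw [Finset.insert_union, Finset.insert_eq_of_mem hv]
    simpa only [CondIndep, Finset.union_assoc, hBC] using h
  obtain ⟨hvB, hvC⟩ := Finset.notMem_union.1 hv
  have marginal_update {S : Finset V} (hvS : v ∉ S) (i : Cell r) (x : Fin (r v)) :
      marginal p S (Function.update i v x) = marginal p S i :=
    marginal_congr p fun w hw => Function.update_of_ne (ne_of_mem_of_not_mem hw hvS) _ _
  intro i
  calc marginal p (A ∪ B ∪ C) i * marginal p C i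
      = ∑ x, marginal p (A ∪ insert v B ∪ C) (Function.update i v x) *
          marginal p C (Function.update i v x) := by
        rw [← sum_marginal_insert_update p (v := v) (by simp [hvA, hvB, hvC]), Finset.sum_mul]
        simp only [marginal_update hvC, Finset.union_insert, Finset.insert_union]
    _ = ∑ x, marginal p (A ∪ C) (Function.update i v x) *
          marginal p (insert v B ∪ C) (Function.update i v x) :=
        Finset.sum_congr rfl fun x _ => h _
    _ = marginal p (A ∪ C) i * marginal p (B ∪ C) i := by
        rw [← sum_marginal_insert_update p hv i, Finset.mul_sum]
        simp only [marginal_update (Finset.notMem_union.2 ⟨hvA, hvC⟩), Finset.insert_union]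

theorem of_union_right (hAB : Disjoint A B) (h : CondIndep p A (B ∪ D) C) :
    CondIndep p A D C := by
  induction B using Finset.induction_on with
  | empty => rwa [Finset.empty_union] at h
  | insert v B _ ih =>
    obtain ⟨hvA, hAB⟩ := Finset.disjoint_insert_right.1 hAB
    rw [Finset.insert_union] at h
    exact ih hAB (h.of_insert_right hvA)

theorem weak_union (hp : ∀ i, 0 ≤ p i) (hAB : Disjoint A B) (h : CondIndep p A (B ∪ D) C) :
    CondIndep p A B (C ∪ D) := by
  intro i
  have hD : marginal p (A ∪ D ∪ C) i * marginal p C i =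
      marginal p (A ∪ C) i * marginal p (D ∪ C) i := h.of_union_right hAB i
  have hBD := h i
  have hABDC : A ∪ B ∪ (C ∪ D) = A ∪ (B ∪ D) ∪ C := by ac_rfl
  have hADC : A ∪ (C ∪ D) = A ∪ D ∪ C := by ac_rfl
  have hBDC : B ∪ (C ∪ D) = B ∪ D ∪ C := by ac_rfl
  rw [hABDC, hADC, hBDC, Finset.union_comm C D]
  by_cases hC : marginal p C i = 0
  · have vanish (S : Finset V) : marginal p (S ∪ C) i = 0 :=
      marginal_eq_zero_of_subset hp Finset.subset_union_right hC
    simp only [vanish, mul_zero]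
  · refine mul_right_cancel₀ hC ?_
    linear_combination marginal p (D ∪ C) i * hBD - marginal p (B ∪ D ∪ C) i * hD

theorem condProb_mul_marginal (hp : ∀ i, 0 ≤ p i) (h : CondIndep p A B C) (i : Cell r) :
    condProb p A C i * marginal p (B ∪ C) i = marginal p (A ∪ B ∪ C) i := by
  by_cases hC : marginal p C i = 0
  · have vanish (S : Finset V) : marginal p (S ∪ C) i = 0 :=
      marginal_eq_zero_of_subset hp Finset.subset_union_right hC
    simp only [vanish, mul_zero]
  · rw [condProb, div_mul_eq_mul_div, ← h i, mul_div_cancel_right₀ _ hC]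

end CondIndep

theorem marginal_biUnion_eq_prod_condProb {ι : Type*} (lt : ι → ι → Prop) [IsStrictTotalOrder ι lt]
    {p : Cell r → ℝ} (hp : ∀ i, 0 ≤ p i) (hp_sum : ∑ i, p i = 1) {A B : ι → Finset V} {s : Finset ι}
    (hB : ∀ k ∈ s, B k ⊆ {l ∈ s | lt k l}.biUnion A)
    (hA : ∀ k ∈ s, CondIndep p (A k) ({l ∈ s | lt k l}.biUnion A \ B k) (B k)) (i : Cell r) :
    marginal p (s.biUnion A) i = ∏ k ∈ s, condProb p (A k) (B k) i := by
  let _ := linearOrderOfSTO lt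
  induction s using Finset.induction_on_min with
  | empty => rw [Finset.biUnion_empty, marginal_empty, hp_sum, Finset.prod_empty]
  | insert a s ha ih =>
    replace ha : ∀ k ∈ s, lt a k := ha
    have past_min : {l ∈ insert a s | lt a l} = s := by
      rw [Finset.filter_insert, if_neg (irrefl_of lt a), Finset.filter_true_of_mem ha]
    have past_of_mem {k : ι} (hk : k ∈ s) : {l ∈ insert a s | lt k l} = {l ∈ s | lt k l} := by
      rw [Finset.filter_insert, if_neg (asymm_of lt (ha k hk))]
    have hBa := hB a (Finset.mem_insert_self a s)
    have hAa := (hA a (Finset.mem_insert_self a s)).condProb_mul_marginal hp i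
    rw [Finset.union_assoc, Finset.sdiff_union_of_subset hBa, past_min] at hAa
    have hs := ih (fun k hk => past_of_mem hk ▸ hB k (Finset.mem_insert_of_mem hk))
      (fun k hk => past_of_mem hk ▸ hA k (Finset.mem_insert_of_mem hk))
    rw [Finset.biUnion_insert, ← hAa, hs, Finset.prod_insert fun has => irrefl_of lt a (ha a has)]

namespace MixedGraph

variable {V : Type*} {G : MixedGraph V} {ord : Finset V → Finset V → Prop} {T : Finset V} {v w : V}

theorem sameComp.symm (h : G.sameComp v w) : G.sameComp w v :=
  have : Std.Symm G.undir := ⟨fun _ _ => G.undir_symm⟩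
  Relation.ReflTransGen.stdSymm.symm _ _ h

variable [Fintype V]

theorem mem_component : w ∈ G.component v ↔ G.sameComp v w :=
  Finset.mem_filter_univ w

theorem mem_component_self (G : MixedGraph V) (v : V) : v ∈ G.component v :=
  mem_component.2 .refl

theorem isComponent_component (G : MixedGraph V) (v : V) : G.IsComponent (G.component v) :=
  ⟨v, rfl⟩

theorem mem_componentsF [DecidableEq V] : T ∈ G.componentsF ↔ G.IsComponent T := by
  simp [componentsF, IsComponent, eq_comm]

theorem IsComponent.component_eq (hT : G.IsComponent T) (hw : w ∈ T) : G.component w = T := by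
  obtain ⟨v, rfl⟩ := hT
  have hvw : G.sameComp v w := mem_component.1 hw
  ext x
  rw [mem_component, mem_component]
  exact ⟨hvw.trans, hvw.symm.trans⟩

theorem IsComponent.connectedIn (hT : G.IsComponent T) : G.ConnectedIn T := by
  obtain ⟨v, rfl⟩ := hT
  refine ⟨⟨v, G.mem_component_self v⟩, fun a ha b hb => ?_⟩
  rw [← (G.isComponent_component v).component_eq ha] at hb ⊢
  induction mem_component.1 hb with
  | refl => exact .refl
  | @tail x y hax hxy ih =>
    exact (ih (mem_component.2 hax)).tail ⟨mem_component.2 hax, mem_component.2 (hax.tail hxy), hxy⟩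

theorem IsComponent.paG_subset_paD [DecidableEq V] (hT : G.IsComponent T) : G.paG T ⊆ G.paD T := by
  intro w hw
  obtain ⟨hwT, v, hv, hwv⟩ := (Finset.mem_filter_univ w).1 hw
  have hne : G.component w ≠ T := fun h => hwT (h ▸ G.mem_component_self w)
  exact (Finset.mem_filter_univ w).2
    ⟨G.isComponent_component w, hT, hne, w, G.mem_component_self w, v, hv, hwv⟩

namespace ConsistentOrder

theorem paD_subset_pre (hord : G.ConsistentOrder ord) : G.paD T ⊆ G.pre ord T := by
  obtain ⟨total, -, -, consistent⟩ := hord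
  intro w hw
  have hwT : G.dirD (G.component w) T := (Finset.mem_filter_univ w).1 hw
  have ⟨hcw, hT, hne, _⟩ := hwT
  have hTw : ord T (G.component w) :=
    (total _ _ hcw hT hne).resolve_left fun h => consistent _ _ hcw hT h hwT
  exact (Finset.mem_filter_univ w).2 hTw

theorem disjoint_pre (hord : G.ConsistentOrder ord) (hT : G.IsComponent T) :
    Disjoint T (G.pre ord T) := by
  obtain ⟨-, irrefl, -, -⟩ := hord
  refine Finset.disjoint_left.2 fun w hw hpre => irrefl T hT ?_
  simpa only [hT.component_eq hw] using (Finset.mem_filter_univ w).1 hpre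

theorem isStrictTotalOrder (hord : G.ConsistentOrder ord) :
    IsStrictTotalOrder {T // G.IsComponent T} (fun T T' => ord T T') where
  trichotomous T T' h h' := Subtype.ext <| by_contra fun hne =>
    (hord.1 T T' T.2 T'.2 hne).elim h h'
  irrefl T := hord.2.1 T T.2
  trans T₁ T₂ T₃ := hord.2.2.1 T₁ T₂ T₃ T₁.2 T₂.2 T₃.2

end ConsistentOrder

theorem biUnion_isComponent [DecidableEq V] (G : MixedGraph V) :
    (Finset.univ : Finset {T // G.IsComponent T}).biUnion (↑) = (Finset.univ : Finset V) := by
  refine Finset.eq_univ_of_forall fun w => Finset.mem_biUnion.2 ?_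
  exact ⟨⟨_, G.isComponent_component w⟩, Finset.mem_univ _, G.mem_component_self w⟩

theorem biUnion_ord_eq_pre [DecidableEq V] (G : MixedGraph V) (ord : Finset V → Finset V → Prop)
    (T : Finset V) :
    (Finset.univ.filter fun T' : {T // G.IsComponent T} => ord T T').biUnion (↑) = G.pre ord T := by
  ext w
  simp only [Finset.mem_biUnion, pre, Finset.mem_filter_univ]
  constructor
  · rintro ⟨T', hT', hw⟩
    rwa [T'.2.component_eq hw]
  · exact fun h => ⟨⟨_, G.isComponent_component w⟩, h, G.mem_component_self w⟩

end MixedGraph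

theorem MRMarkov.condIndep_paD {G : MixedGraph V} {ord : Finset V → Finset V → Prop}
    {p : Cell r → ℝ} (hMR : MRMarkov G ord p) (hord : G.ConsistentOrder ord) (hp : ∀ i, 0 ≤ p i)
    {T : Finset V} (hT : G.IsComponent T) :
    CondIndep p T (G.pre ord T \ G.paD T) (G.paD T) := by
  have hMR1 : CondIndep p T (G.pre ord T \ G.paG T) (G.paG T) :=
    (hMR T hT T subset_rfl hT.connectedIn.1).1 hT.connectedIn
  have hdisj : Disjoint T (G.pre ord T \ G.paD T) :=
    (hord.disjoint_pre hT).mono_right Finset.sdiff_subset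
  have hpre : G.pre ord T \ G.paG T = G.pre ord T \ G.paD T ∪ G.paD T \ G.paG T :=
    (Finset.sdiff_union_sdiff_cancel hord.paD_subset_pre hT.paG_subset_paD).symm
  rw [hpre] at hMR1
  simpa only [Finset.union_sdiff_of_subset hT.paG_subset_paD] using hMR1.weak_union hp hdisj

theorem mr_markov_factorization_general {G : MixedGraph V} {ord : Finset V → Finset V → Prop}
    (hord : G.ConsistentOrder ord) {p : Cell r → ℝ} (hp : ∀ i, 0 ≤ p i) (hp_sum : ∑ i, p i = 1)
    (hMarkov : ∀ T, G.IsComponent T → CondIndep p T (G.pre ord T \ G.paD T) (G.paD T))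
    (i : Cell r) : p i = ∏ T ∈ G.componentsF, condProb p T (G.paD T) i := by
  have := hord.isStrictTotalOrder
  have factorization := marginal_biUnion_eq_prod_condProb
    (fun T T' : {T // G.IsComponent T} => ord T T') hp hp_sum
    (A := (↑)) (B := fun T => G.paD T) (s := Finset.univ)
  simp only [G.biUnion_isComponent, G.biUnion_ord_eq_pre, marginal_univ] at factorization
  rw [factorization (fun _ _ => hord.paD_subset_pre) (fun T _ => hMarkov T T.2),
    Finset.prod_subtype G.componentsF fun _ => MixedGraph.mem_componentsF]

/-- Remark 2: a strictly positive joint pmf obeying the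
multivariate regression Markov property factorizes according to the directed
acyclic graph of the chain components:
`p(i) = ∏_{T ∈ 𝒯} p(i_T | i_{pa_D(T)})`. -/
theorem mr_markov_factorization
    {V : Type*} [Fintype V] [DecidableEq V] {r : V → ℕ} (hr : ∀ v, 2 ≤ r v)
    (G : MixedGraph V) (hG : G.NoSemiDirectedCycle)
    (ord : Finset V → Finset V → Prop) (hord : G.ConsistentOrder ord)
    (p : Cell r → ℝ) (hp : IsPosPMF p) (hMR : MRMarkov G ord p) :
    ∀ i : Cell r, p i = ∏ T ∈ G.componentsF, condProb p T (G.paD T) i := by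
  exact mr_markov_factorization_general hord (fun i => (hp.1 i).le) hp.2 fun _ hT =>
    hMR.condIndep_paD hord (fun i => (hp.1 i).le) hT
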